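/- Let δ ∈ [0,1], let X be uniform on {0,1,2,3}, let Z be independent of X with Pr(Z=0) = δ and Pr(Z=1) = Pr(Z=2) = Pr(Z=3) = (1-δ)/3, and let Y = (X+Z) mod 4. Then I(X;[Y]_4) = I(X;Y) = 2 - h(δ) - (1-δ)·log 3; I(X;[Y]_2) = h(1/4) - (1/4)·h(δ) - (3/4)·h((1-δ)/3) if δ ≤ 1/4 and I(X;[Y]_2) = 1 - h((1+2δ)/3) if δ > 1/4; and for every δ ∉ {1/4, 1}, 2·I(X;[Y]_2) < I(X;[Y]_4). In particular, the map M ↦ I(X;[Y]_M) does not satisfy the 'diminishing returns' inequality I(X;[Y]_{M₁M₂}) ≤ I(X;[Y]_{M₁}) + I(X;[Y]_{M₂}) in general. -/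

import Mathlib

/-!
Put `t = (1 - δ)/3`, so `δ = 1 - 3t`. For a quantizer `f`, the pair `(X, f(Y))` has a law determined
by the fibers of `f`, and the mutual information is a sum over the fibers of a quantity
`cellInfo t k` depending only on the fiber size `k` (`miBits_quantJoint`).

With four levels, Jensen's inequality for `x log x` gives `cellInfo t k ≤ k * cellInfo t 1`
(`cellInfo_le`), so the identity is optimal. With two levels, only the size patterns `0+4`, `1+3`
and `2+2` occur, so the optimum is the larger of the last two (`quantMI_two`).

What remains are inequalities between explicit functions of `t`, all of the form `fam`. The
difference between the `1+3` and the `2+2` patterns (`gap`) has second derivative of the sign of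
`4t - 1` and a zero and critical point at `t = 1/4`, hence has the sign of `t - 1/4`. Both patterns
have less than half of `I(X;Y)` for `t ∉ {0, 1/4}` (`one_three_pos`, `two_two_pos`), again by the
sign of the second derivative.
-/

open scoped BigOperators

/-- Mutual information (in bits) of a joint probability mass function `p` on `𝒳 × 𝒴`,
with the convention `0 · log 0 = 0`. -/
noncomputable def miBits {𝒳 𝒴 : Type*} (p : 𝒳 → 𝒴 → ℝ) : ℝ :=
  ∑' x, ∑' y, p x y * Real.logb 2 (p x y / ((∑' y', p x y') * (∑' x', p x' y)))

/-- `p` is a joint probability mass function. -/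
def IsJointPMF {𝒳 𝒴 : Type*} (p : 𝒳 → 𝒴 → ℝ) : Prop :=
  (∀ x y, 0 ≤ p x y) ∧ Summable (fun xy : 𝒳 × 𝒴 => p xy.1 xy.2) ∧ (∑' x, ∑' y, p x y) = 1

/-- Joint pmf of `(X, f(Y))` when `(X,Y) ~ p` and `f` is a deterministic `M`-level quantizer. -/
noncomputable def quantJoint {𝒳 𝒴 : Type*} (p : 𝒳 → 𝒴 → ℝ) {M : ℕ} (f : 𝒴 → Fin M) :
    𝒳 → Fin M → ℝ :=
  fun x m => ∑' y, if f y = m then p x y else 0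

/-- `I(X;[Y]_M)`: the best mutual information achievable by a deterministic `M`-level
quantizer of `Y`. -/
noncomputable def quantMI {𝒳 𝒴 : Type*} (p : 𝒳 → 𝒴 → ℝ) (M : ℕ) : ℝ :=
  ⨆ f : 𝒴 → Fin M, miBits (quantJoint p f)

/-- The information distillation function `ID_M(K, β)`. -/
noncomputable def ID (M K : ℕ) (β : ℝ) : ℝ :=
  sInf {v | ∃ p : Fin K → ℕ → ℝ, IsJointPMF p ∧ β ≤ miBits p ∧ v = quantMI p M}

/-- Binary entropy function (bits). -/
noncomputable def hBin (t : ℝ) : ℝ :=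
  -(t * Real.logb 2 t) - (1 - t) * Real.logb 2 (1 - t)

/-! ### Functions built from `t log t` -/

/-- The function `t ↦ t log t` in nats (with value `0` at `0`). -/
noncomputable def xlog (t : ℝ) : ℝ := t * Real.log t

lemma xlog_mul {c : ℝ} (hc : c ≠ 0) (t : ℝ) : xlog (c * t) = c * t * Real.log c + c * xlog t := by
  unfold xlog
  rcases eq_or_ne t 0 with rfl | ht
  · simp
  · rw [Real.log_mul hc ht]; ring

lemma hasDerivAt_xlog {t : ℝ} (ht : t ≠ 0) : HasDerivAt xlog (Real.log t + 1) t :=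
  Real.hasDerivAt_mul_log ht

lemma continuous_xlog : Continuous xlog := Real.continuous_mul_log

/-- Affine functions plus combinations of `xlog` at `1 - 3t, t, 1 - t, 1 - 2t`. With `t = (1 - δ)/3`
all differences of mutual informations compared below are of this form. -/
noncomputable def fam (c d α β γ ε t : ℝ) : ℝ :=
  c + d * t + α * xlog (1 - 3 * t) + β * xlog t + γ * xlog (1 - t) + ε * xlog (1 - 2 * t)

/-- The derivative of `fam` on `(0, 1/3)`. -/
noncomputable def famD (d α β γ ε t : ℝ) : ℝ :=
  d - 3 * α * (Real.log (1 - 3 * t) + 1) + β * (Real.log t + 1) - γ * (Real.log (1 - t) + 1)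
    - 2 * ε * (Real.log (1 - 2 * t) + 1)

/-- The second derivative of `fam` on `(0, 1/3)`. -/
noncomputable def famDD (α β γ ε t : ℝ) : ℝ :=
  9 * α / (1 - 3 * t) + β / t + γ / (1 - t) + 4 * ε / (1 - 2 * t)

lemma continuous_fam (c d α β γ ε : ℝ) : Continuous (fam c d α β γ ε) := by
  have := continuous_xlog
  unfold fam
  fun_prop

lemma hasDerivAt_one_sub_mul (k t : ℝ) : HasDerivAt (fun t : ℝ => 1 - k * t) (-k) t := by
  simpa using ((hasDerivAt_id t).const_mul k).const_sub 1

lemma hasDerivAt_fam (c d α β γ ε : ℝ) {t : ℝ} (h0 : 0 < t) (h1 : t < 1 / 3) :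
    HasDerivAt (fam c d α β γ ε) (famD d α β γ ε t) t := by
  have e3 : HasDerivAt (fun t : ℝ => xlog (1 - 3 * t)) ((Real.log (1 - 3 * t) + 1) * (-3)) t :=
    (hasDerivAt_xlog (by linarith)).comp t (hasDerivAt_one_sub_mul 3 t)
  have e2 : HasDerivAt (fun t : ℝ => xlog (1 - 2 * t)) ((Real.log (1 - 2 * t) + 1) * (-2)) t :=
    (hasDerivAt_xlog (by linarith)).comp t (hasDerivAt_one_sub_mul 2 t)
  have e1 : HasDerivAt (fun t : ℝ => xlog (1 - t)) ((Real.log (1 - t) + 1) * (-1)) t :=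
    (hasDerivAt_xlog (by linarith)).comp t ((hasDerivAt_id t).const_sub 1)
  have h := ((((((hasDerivAt_id t).const_mul d).const_add c).add (e3.const_mul α)).add
    ((hasDerivAt_xlog h0.ne').const_mul β)).add (e1.const_mul γ)).add (e2.const_mul ε)
  refine h.congr_deriv ?_
  unfold famD
  ring

lemma hasDerivAt_famD (d α β γ ε : ℝ) {t : ℝ} (h0 : 0 < t) (h1 : t < 1 / 3) :
    HasDerivAt (famD d α β γ ε) (famDD α β γ ε t) t := by
  have e3 := (hasDerivAt_one_sub_mul 3 t).log (by linarith)
  have e2 := (hasDerivAt_one_sub_mul 2 t).log (by linarith)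
  have e1 := ((hasDerivAt_id t).const_sub 1).log (by simp; linarith)
  have h := (((((e3.add_const 1).const_mul (3 * α)).const_sub d).add
    (((Real.hasDerivAt_log h0.ne').add_const 1).const_mul β)).sub
    ((e1.add_const 1).const_mul γ)).sub ((e2.add_const 1).const_mul (2 * ε))
  refine h.congr_deriv ?_
  unfold famDD
  simp only [id]
  ring

lemma strictConvexOn_fam (c d α β γ ε : ℝ) {u v : ℝ} (hu : 0 ≤ u) (hv : v ≤ 1 / 3)
    (h : ∀ t, u < t → t < v → 0 < famDD α β γ ε t) :
    StrictConvexOn ℝ (Set.Icc u v) (fam c d α β γ ε) := by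
  refine strictConvexOn_of_deriv2_pos (convex_Icc _ _) (continuous_fam _ _ _ _ _ _).continuousOn ?_
  intro x hx
  rw [interior_Icc] at hx
  have hd : deriv (fam c d α β γ ε) =ᶠ[nhds x] famD d α β γ ε := by
    filter_upwards [isOpen_Ioo.mem_nhds hx] with y hy
    exact (hasDerivAt_fam _ _ _ _ _ _ (hu.trans_lt hy.1) (hy.2.trans_le hv)).deriv
  have : deriv^[2] (fam c d α β γ ε) x = famDD α β γ ε x := by
    simp only [Function.iterate_succ, Function.iterate_zero, Function.comp, id]
    rw [hd.deriv_eq]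
    exact (hasDerivAt_famD _ _ _ _ _ (hu.trans_lt hx.1) (hx.2.trans_le hv)).deriv
  rw [this]
  exact h x hx.1 hx.2

/-- A strictly convex function lies strictly above its value at a critical point. -/
lemma StrictConvexOn.lt_of_critical {S : Set ℝ} {f : ℝ → ℝ} (hf : StrictConvexOn ℝ S f) {x y : ℝ}
    (hx : x ∈ S) (hy : y ∈ S) (hxy : y ≠ x) (hd : HasDerivAt f 0 x) : f x < f y := by
  rcases lt_or_gt_of_ne hxy with h | h
  · have := hf.slope_lt_of_hasDerivAt hy hx h hd
    rw [slope_def_field, div_lt_iff₀ (by linarith)] at this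
    linarith
  · have := hf.lt_slope_of_hasDerivAt hx hy h hd
    rw [slope_def_field, lt_div_iff₀ (by linarith)] at this
    linarith

lemma log_quarter : Real.log (1 / 4) = -2 * Real.log 2 := by
  rw [one_div, Real.log_inv, show (4 : ℝ) = 2 ^ 2 by norm_num, Real.log_pow]
  push_cast; ring

lemma log_three_quarters : Real.log (3 / 4) = Real.log 3 - 2 * Real.log 2 := by
  rw [Real.log_div (by norm_num) (by norm_num), show (4 : ℝ) = 2 ^ 2 by norm_num, Real.log_pow]
  push_cast; ring

lemma log_half : Real.log (1 / 2) = - Real.log 2 := by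
  rw [one_div, Real.log_inv]

lemma fam_quarter (c d α β γ ε : ℝ) : fam c d α β γ ε (1 / 4) =
    c + d / 4 - (α + β) * Real.log 2 / 2 + 3 / 4 * γ * (Real.log 3 - 2 * Real.log 2)
      - ε * Real.log 2 / 2 := by
  unfold fam xlog
  norm_num only [show (1 : ℝ) - 3 * (1 / 4) = 1 / 4 by norm_num,
    show (1 : ℝ) - 2 * (1 / 4) = 1 / 2 by norm_num, show (1 : ℝ) - 1 / 4 = 3 / 4 by norm_num]
  rw [log_quarter, log_half, log_three_quarters]
  ring

lemma famD_quarter (d α β γ ε : ℝ) : famD d α β γ ε (1 / 4) =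
    d - 3 * α * (1 - 2 * Real.log 2) + β * (1 - 2 * Real.log 2)
      - γ * (Real.log 3 - 2 * Real.log 2 + 1) - 2 * ε * (1 - Real.log 2) := by
  unfold famD
  norm_num only [show (1 : ℝ) - 3 * (1 / 4) = 1 / 4 by norm_num,
    show (1 : ℝ) - 2 * (1 / 4) = 1 / 2 by norm_num, show (1 : ℝ) - 1 / 4 = 3 / 4 by norm_num]
  rw [log_quarter, log_half, log_three_quarters]
  ring

/-- Twice the information of the `2+2` quantizer is below `I(X;Y)`; `t = 1/4` is `δ = 1/4`. The
difference in nats is concave on `[0, 1/6]`, where it is positive as its endpoint values are `0` and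
positive, and convex on `[1/6, 1/3]` with its minimum `0` at `1/4`. -/
lemma two_two_pos {t : ℝ} (h0 : 0 < t) (h1 : t ≤ 1 / 3) (h : t ≠ 1 / 4) :
    0 < fam 0 (-4 * Real.log 2) 1 (-1) 0 (-2) t := by
  have hdd : ∀ s : ℝ, 0 < s → s < 1 / 3 →
      famDD 1 (-1) 0 (-2) s = (6 * s - 1) / ((1 - 3 * s) * s * (1 - 2 * s)) := by
    intro s hs hs'
    have e1 : (1 - 3 * s) ≠ 0 := by linarith
    have e2 : (1 - 2 * s) ≠ 0 := by linarith
    have e3 : s ≠ 0 := hs.ne'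
    unfold famDD
    rw [div_add_div _ _ e1 e3, zero_div, add_zero, div_add_div _ _ (mul_ne_zero e1 e3) e2]
    congr 1
    ring
  have hconv : StrictConvexOn ℝ (Set.Icc (1 / 6) (1 / 3))
      (fam 0 (-4 * Real.log 2) 1 (-1) 0 (-2)) := by
    refine strictConvexOn_fam _ _ _ _ _ _ (by norm_num) le_rfl fun s hs hs' => ?_
    rw [hdd s (by linarith) hs']
    have e1 : 0 < (1 - 3 * s) := by linarith
    have e2 : 0 < (1 - 2 * s) := by linarith
    have e3 : 0 < s := by linarith
    have e4 : 0 < 6 * s - 1 := by linarith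
    positivity
  have hcrit : HasDerivAt (fam 0 (-4 * Real.log 2) 1 (-1) 0 (-2)) 0 (1 / 4) := by
    refine (hasDerivAt_fam _ _ _ _ _ _ (by norm_num) (by norm_num)).congr_deriv ?_
    rw [famD_quarter]; ring
  have hq : fam 0 (-4 * Real.log 2) 1 (-1) 0 (-2) (1 / 4) = 0 := by
    rw [fam_quarter]; ring
  have key : ∀ s : ℝ, 1 / 6 ≤ s → s ≤ 1 / 3 → s ≠ 1 / 4 →
      0 < fam 0 (-4 * Real.log 2) 1 (-1) 0 (-2) s := by
    intro s hs hs' hne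
    exact hq.symm.trans_lt (hconv.lt_of_critical (by norm_num) ⟨hs, hs'⟩ hne hcrit)
  rcases le_or_gt (1 / 6) t with h6 | h6
  · exact key t h6 h1 h
  · have hneg : StrictConvexOn ℝ (Set.Icc 0 (1 / 6))
        (fam 0 (4 * Real.log 2) (-1) 1 0 2) := by
      refine strictConvexOn_fam _ _ _ _ _ _ le_rfl (by norm_num) fun s hs hs' => ?_
      have : famDD (-1) 1 0 2 s = - famDD 1 (-1) 0 (-2) s := by unfold famDD; ring
      rw [this, hdd s hs (by linarith), ← neg_div]
      have e1 : 0 < (1 - 3 * s) := by linarith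
      have e2 : 0 < (1 - 2 * s) := by linarith
      have e4 : 0 < -(6 * s - 1) := by linarith
      positivity
    have hfl : ∀ s, fam 0 (4 * Real.log 2) (-1) 1 0 2 s
        = - fam 0 (-4 * Real.log 2) 1 (-1) 0 (-2) s := by
      intro s; unfold fam; ring
    have h00 : fam 0 (4 * Real.log 2) (-1) 1 0 2 0 = 0 := by simp [fam, xlog]
    have h6pos := key (1 / 6) le_rfl (by norm_num) (by norm_num)
    have := hneg.right (show (0 : ℝ) ∈ _ by norm_num)
      (show (1 / 6 : ℝ) ∈ _ by norm_num) (by norm_num) (show 0 < 1 - 6 * t by linarith)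
      (show 0 < 6 * t by linarith) (by ring)
    simp only [smul_eq_mul, h00] at this
    rw [show (1 - 6 * t) * 0 + 6 * t * (1 / 6) = t by ring, hfl, hfl] at this
    have := mul_pos h0 h6pos
    linarith

/-- Twice the information of the `1+3` quantizer is below `I(X;Y)`: twice the difference in nats is
strictly convex with its minimum `0` at `t = 1/4`. -/
lemma one_three_pos {t : ℝ} (h0 : 0 ≤ t) (h1 : t ≤ 1 / 3) (h : t ≠ 1 / 4) :
    0 < fam (3 * Real.log 3 - 4 * Real.log 2) (-3 * Real.log 3) 1 0 (-3) 0 t := by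
  have hconv : StrictConvexOn ℝ (Set.Icc 0 (1 / 3))
      (fam (3 * Real.log 3 - 4 * Real.log 2) (-3 * Real.log 3) 1 0 (-3) 0) := by
    refine strictConvexOn_fam _ _ _ _ _ _ le_rfl le_rfl fun s hs hs' => ?_
    have e1 : 0 < (1 - 3 * s) := by linarith
    have e2 : 0 < (1 - s) := by linarith
    have : famDD 1 0 (-3) 0 s = 6 / ((1 - 3 * s) * (1 - s)) := by
      unfold famDD
      field_simp
      ring
    rw [this]
    positivity
  have hcrit : HasDerivAt (fam (3 * Real.log 3 - 4 * Real.log 2) (-3 * Real.log 3) 1 0 (-3) 0)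
      0 (1 / 4) := by
    refine (hasDerivAt_fam _ _ _ _ _ _ (by norm_num) (by norm_num)).congr_deriv ?_
    rw [famD_quarter]; ring
  have hq : fam (3 * Real.log 3 - 4 * Real.log 2) (-3 * Real.log 3) 1 0 (-3) 0 (1 / 4) = 0 := by
    rw [fam_quarter]; ring
  exact hq.symm.trans_lt (hconv.lt_of_critical (by norm_num) ⟨h0, h1⟩ h hcrit)

/-- Four times the difference between the `1+3` and the `2+2` quantizer (in nats). -/
noncomputable def gap (t : ℝ) : ℝ :=
  fam (4 * Real.log 2 - 3 * Real.log 3) (3 * Real.log 3 - 8 * Real.log 2) 1 (-2) 3 (-4) t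

lemma gap_deriv2 {s : ℝ} (hs : 0 < s) (hs' : s < 1 / 3) :
    famDD 1 (-2) 3 (-4) s = 2 * (4 * s - 1) / ((1 - 3 * s) * s * (1 - s) * (1 - 2 * s)) := by
  have e1 : (1 - 3 * s) ≠ 0 := by linarith
  have e2 : (1 - 2 * s) ≠ 0 := by linarith
  have e3 : s ≠ 0 := hs.ne'
  have e4 : (1 - s) ≠ 0 := by linarith
  unfold famDD
  rw [div_add_div _ _ e1 e3, div_add_div _ _ (mul_ne_zero e1 e3) e4,
    div_add_div _ _ (mul_ne_zero (mul_ne_zero e1 e3) e4) e2]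
  congr 1
  ring

lemma gap_quarter : gap (1 / 4) = 0 := by
  unfold gap
  rw [fam_quarter]; ring

lemma hasDerivAt_gap_quarter : HasDerivAt gap 0 (1 / 4) := by
  refine (hasDerivAt_fam _ _ _ _ _ _ (by norm_num) (by norm_num)).congr_deriv ?_
  rw [famD_quarter]; ring

/-- `gap` is convex to the right of its critical zero `1/4`. -/
lemma gap_nonneg {t : ℝ} (h0 : 1 / 4 ≤ t) (h1 : t ≤ 1 / 3) : 0 ≤ gap t := by
  have hconv : StrictConvexOn ℝ (Set.Icc (1 / 4) (1 / 3)) gap := by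
    refine strictConvexOn_fam _ _ _ _ _ _ (by norm_num) le_rfl fun s hs hs' => ?_
    rw [gap_deriv2 (by linarith) hs']
    have e1 : 0 < (1 - 3 * s) := by linarith
    have e2 : 0 < (1 - 2 * s) := by linarith
    have e3 : 0 < s := by linarith
    have e4 : 0 < (1 - s) := by linarith
    have e5 : 0 < 4 * s - 1 := by linarith
    positivity
  rcases eq_or_ne t (1 / 4) with rfl | h
  · exact gap_quarter.ge
  · rw [← gap_quarter]
    exact (hconv.lt_of_critical (by norm_num) ⟨h0, h1⟩ h hasDerivAt_gap_quarter).le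

/-- `gap` is concave to the left of its critical zero `1/4`. -/
lemma gap_nonpos {t : ℝ} (h0 : 0 ≤ t) (h1 : t ≤ 1 / 4) : gap t ≤ 0 := by
  have hneg : (fun s => - gap s) =
      fam (-(4 * Real.log 2 - 3 * Real.log 3)) (-(3 * Real.log 3 - 8 * Real.log 2))
        (-1) 2 (-3) 4 := by
    funext s; unfold gap fam; ring
  have hconv : StrictConvexOn ℝ (Set.Icc 0 (1 / 4)) (fun s => - gap s) := by
    rw [hneg]
    refine strictConvexOn_fam _ _ _ _ _ _ le_rfl (by norm_num) fun s hs hs' => ?_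
    have : famDD (-1) 2 (-3) 4 s = - famDD 1 (-2) 3 (-4) s := by unfold famDD; ring
    rw [this, gap_deriv2 hs (by linarith), ← neg_div]
    have e1 : 0 < (1 - 3 * s) := by linarith
    have e2 : 0 < (1 - 2 * s) := by linarith
    have e4 : 0 < (1 - s) := by linarith
    have e5 : 0 < -(2 * (4 * s - 1)) := by linarith
    positivity
  rcases eq_or_ne t (1 / 4) with rfl | h
  · exact gap_quarter.le
  · have hd : HasDerivAt (fun s => - gap s) 0 (1 / 4) := 
      hasDerivAt_gap_quarter.neg.congr_deriv neg_zero
    have := hconv.lt_of_critical (by norm_num) ⟨h0, h1⟩ h hd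
    simp only [gap_quarter] at this
    linarith

/-! ### Information of a quantizer as a sum over its cells -/

/-- The joint law of `(X, Y)` with the noise parametrized by `t = (1 - δ)/3`, so `δ = 1 - 3t`. -/
noncomputable def chan (t : ℝ) : Fin 4 → Fin 4 → ℝ :=
  fun x y => (1 / 4) * (if y - x = 0 then 1 - 3 * t else t)

/-- The contribution to the mutual information of one pair (input, quantizer cell) when the cell has
`k` elements and conditional probability `q` given the input; the marginals are `1/4` and `k/4`. -/
noncomputable def atomInfo (k q : ℝ) : ℝ :=
  1 / 4 * q * Real.logb 2 (1 / 4 * q / (1 / 4 * (k / 4)))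

/-- The contribution to the mutual information of a quantizer cell with `k` elements: the `k` inputs
in the cell reach it with probability `k t + (1 - 4t)`, the other `4 - k` inputs with `k t`. -/
noncomputable def cellInfo (t k : ℝ) : ℝ :=
  k * atomInfo k (k * t + (1 - 4 * t)) + (4 - k) * atomInfo k (k * t)

lemma quantJoint_chan (t : ℝ) {M : ℕ} (f : Fin 4 → Fin M) (x : Fin 4) (m : Fin M) :
    quantJoint (chan t) f x m =
      1 / 4 * ((Finset.univ.filter fun y => f y = m).card * t +
        if f x = m then 1 - 4 * t else 0) := by
  have h : ∀ y, (if f y = m then chan t x y else 0) =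
      1 / 4 * ((if f y = m then t else 0) +
        (if y = x then (if f x = m then 1 - 4 * t else 0) else 0)) := by
    intro y
    unfold chan
    rcases eq_or_ne y x with rfl | hyx
    · by_cases hy : f y = m
      · simp only [hy, sub_self, if_true]; ring
      · simp [hy]
    · simp [hyx, sub_eq_zero]
  unfold quantJoint
  rw [tsum_fintype, Finset.sum_congr rfl fun y _ => h y, ← Finset.mul_sum, Finset.sum_add_distrib,
    ← Finset.sum_filter, Finset.sum_const, nsmul_eq_mul, Finset.sum_ite_eq' Finset.univ x]
  simp

lemma sum_card_fiber {M : ℕ} (f : Fin 4 → Fin M) :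
    ∑ m, (((Finset.univ.filter fun y => f y = m).card : ℕ) : ℝ) = 4 := by
  have h := Finset.card_eq_sum_card_fiberwise (f := f) (s := Finset.univ) (t := Finset.univ)
    (fun _ _ => by simp)
  rw [← Nat.cast_sum, ← h]
  simp

lemma miBits_quantJoint (t : ℝ) {M : ℕ} (f : Fin 4 → Fin M) :
    miBits (quantJoint (chan t) f) =
      ∑ m, cellInfo t (Finset.univ.filter fun y => f y = m).card := by
  have hrow : ∀ x, ∑ m, quantJoint (chan t) f x m = 1 / 4 := by
    intro x
    simp only [quantJoint_chan]
    rw [← Finset.mul_sum, Finset.sum_add_distrib, ← Finset.sum_mul, sum_card_fiber,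
      Finset.sum_ite_eq Finset.univ (f x)]
    simp
  have hcol : ∀ m, ∑ x, quantJoint (chan t) f x m =
      ((Finset.univ.filter fun y => f y = m).card : ℝ) / 4 := by
    intro m
    simp only [quantJoint_chan]
    rw [← Finset.mul_sum, Finset.sum_add_distrib, Finset.sum_const, ← Finset.sum_filter,
      Finset.sum_const, Finset.card_univ, Fintype.card_fin]
    simp only [nsmul_eq_mul]
    push_cast
    ring
  unfold miBits
  simp only [tsum_fintype, hrow, hcol]
  rw [Finset.sum_comm]
  refine Finset.sum_congr rfl fun m _ => ?_
  set k := (Finset.univ.filter fun y => f y = m).card with hk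
  have hterm : ∀ x, quantJoint (chan t) f x m *
      Real.logb 2 (quantJoint (chan t) f x m / (1 / 4 * ((k : ℝ) / 4))) =
      atomInfo k (k * t) + if f x = m then
        atomInfo k (k * t + (1 - 4 * t)) - atomInfo k (k * t) else 0 := by
    intro x
    rw [quantJoint_chan, ← hk]
    by_cases hx : f x = m
    · simp only [hx, if_true, atomInfo]; ring
    · simp only [hx, if_false, atomInfo, add_zero]
  rw [Finset.sum_congr rfl fun x _ => hterm x, Finset.sum_add_distrib, Finset.sum_const,
    ← Finset.sum_filter, Finset.sum_const, Finset.card_univ, Fintype.card_fin, ← hk]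
  unfold cellInfo
  simp only [nsmul_eq_mul]
  push_cast
  ring

lemma atomInfo_mul_log {k : ℝ} (hk : 0 < k) (q : ℝ) :
    atomInfo k q * Real.log 2 = 1 / 4 * (q * (2 * Real.log 2 - Real.log k) + xlog q) := by
  have h2 : Real.log 2 ≠ 0 := (Real.log_pos one_lt_two).ne'
  unfold atomInfo xlog Real.logb
  rcases eq_or_ne q 0 with rfl | hq
  · simp
  · have e : 1 / 4 * q / (1 / 4 * (k / 4)) = 2 ^ 2 * q / k := by field_simp; norm_num
    rw [e, Real.log_div (by positivity) hk.ne', Real.log_mul (by norm_num) hq, Real.log_pow]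
    field_simp
    push_cast
    ring

lemma cellInfo_mul_log (t : ℝ) {k : ℝ} (hk : 0 ≤ k) :
    cellInfo t k * Real.log 2 = k / 4 * (2 * Real.log 2 + xlog (1 + (k - 4) * t)
      - (1 + (k - 4) * t) * Real.log k + (4 - k) * xlog t) := by
  rcases hk.eq_or_lt with rfl | hk
  · simp [cellInfo, atomInfo]
  · unfold cellInfo
    rw [add_mul, mul_assoc, mul_assoc, atomInfo_mul_log hk, atomInfo_mul_log hk, xlog_mul hk.ne',
      show k * t + (1 - 4 * t) = 1 + (k - 4) * t by ring]
    ring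

/-- Merging output symbols does not increase information: Jensen's inequality for `x log x` bounds
the information of a cell of size `k` by that of `k` singletons. -/
lemma cellInfo_le {t : ℝ} (h0 : 0 ≤ t) (h1 : t ≤ 1 / 3) (k : ℕ) :
    cellInfo t k ≤ k * cellInfo t 1 := by
  rcases Nat.eq_zero_or_pos k with rfl | hk
  · simp [cellInfo, atomInfo]
  have hk1 : (1 : ℝ) ≤ k := by exact_mod_cast hk
  have hk0 : (0 : ℝ) < k := by linarith
  have hL : 0 < Real.log 2 := Real.log_pos one_lt_two
  refine le_of_mul_le_mul_right ?_ hL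
  rw [mul_assoc, cellInfo_mul_log t hk0.le, cellInfo_mul_log t zero_le_one, Real.log_one]
  have hj := Real.convexOn_mul_log.2 (show 1 - 3 * t ∈ Set.Ici (0 : ℝ) by simp; linarith)
    (show t ∈ Set.Ici (0 : ℝ) from h0) (show 0 ≤ (k : ℝ)⁻¹ by positivity)
    (show 0 ≤ (k : ℝ)⁻¹ * (k - 1) from mul_nonneg (by positivity) (by linarith))
    (by field_simp; ring)
  simp only [smul_eq_mul] at hj
  rw [show (k : ℝ)⁻¹ * (1 - 3 * t) + (k : ℝ)⁻¹ * (k - 1) * t = (k : ℝ)⁻¹ * (1 + (k - 4) * t) by ring]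
    at hj
  change xlog ((k : ℝ)⁻¹ * (1 + (k - 4) * t)) ≤
    (k : ℝ)⁻¹ * xlog (1 - 3 * t) + (k : ℝ)⁻¹ * (k - 1) * xlog t at hj
  rw [xlog_mul (by positivity), Real.log_inv] at hj
  have hj2 := mul_le_mul_of_nonneg_left hj (mul_pos hk0 hk0).le
  have e : (k : ℝ) * k * ((k : ℝ)⁻¹ * (1 + (k - 4) * t) * -Real.log k
      + (k : ℝ)⁻¹ * xlog (1 + (k - 4) * t)) =
      k * (xlog (1 + (k - 4) * t) - (1 + (k - 4) * t) * Real.log k) := by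
    field_simp; ring
  have e' : (k : ℝ) * k * ((k : ℝ)⁻¹ * xlog (1 - 3 * t) + (k : ℝ)⁻¹ * (k - 1) * xlog t) =
      k * (xlog (1 - 3 * t) + (k - 1) * xlog t) := by
    field_simp
  rw [e, e'] at hj2
  rw [show (1 : ℝ) + (1 - 4) * t = 1 - 3 * t by ring]
  linarith

lemma cellInfo_zero (t : ℝ) : cellInfo t 0 = 0 := by simp [cellInfo, atomInfo]

lemma cellInfo_four (t : ℝ) : cellInfo t 4 = 0 := by
  simp [cellInfo, atomInfo]

lemma cellInfo_one_mul_log (t : ℝ) : cellInfo t 1 * Real.log 2 =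
    1 / 4 * (2 * Real.log 2 + xlog (1 - 3 * t) + 3 * xlog t) := by
  rw [cellInfo_mul_log t zero_le_one, Real.log_one, show (1 : ℝ) + (1 - 4) * t = 1 - 3 * t by ring]
  ring

lemma cellInfo_two_mul_log (t : ℝ) : cellInfo t 2 * Real.log 2 =
    1 / 2 * ((1 + 2 * t) * Real.log 2 + xlog (1 - 2 * t) + 2 * xlog t) := by
  rw [cellInfo_mul_log t zero_le_two, show (1 : ℝ) + (2 - 4) * t = 1 - 2 * t by ring]
  ring

lemma cellInfo_three_mul_log (t : ℝ) : cellInfo t 3 * Real.log 2 =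
    3 / 4 * (2 * Real.log 2 - (1 - t) * Real.log 3 + xlog (1 - t) + xlog t) := by
  rw [cellInfo_mul_log t (by norm_num), show (1 : ℝ) + (3 - 4) * t = 1 - t by ring]
  ring

lemma hBin_mul_log (s : ℝ) : hBin s * Real.log 2 = -xlog s - xlog (1 - s) := by
  have h2 : Real.log 2 ≠ 0 := (Real.log_pos one_lt_two).ne'
  unfold hBin xlog Real.logb
  field_simp

lemma cellInfo_two_nonneg (t : ℝ) : 0 ≤ cellInfo t 2 := by
  have hL : 0 < Real.log 2 := Real.log_pos one_lt_two
  have h := Real.binEntropy_le_log_two (p := 2 * t)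
  have h2 := xlog_mul (c := 2) two_ne_zero t
  simp only [Real.binEntropy, Real.log_inv] at h
  refine nonneg_of_mul_nonneg_left ?_ hL
  rw [cellInfo_two_mul_log]
  unfold xlog at *
  linarith

/-! ### Optimal quantizers -/

lemma quantJoint_id (t : ℝ) : quantJoint (chan t) (id : Fin 4 → Fin 4) = chan t := by
  funext x m
  simp [quantJoint, tsum_fintype]

lemma miBits_chan (t : ℝ) : miBits (chan t) = 4 * cellInfo t 1 := by
  rw [← quantJoint_id, miBits_quantJoint]
  simp [Finset.filter_eq']

lemma quantMI_four {t : ℝ} (h0 : 0 ≤ t) (h1 : t ≤ 1 / 3) :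
    quantMI (chan t) 4 = 4 * cellInfo t 1 := by
  refine le_antisymm (ciSup_le fun f => ?_) ?_
  · rw [miBits_quantJoint]
    refine (Finset.sum_le_sum fun m _ => cellInfo_le h0 h1 _).trans ?_
    rw [← Finset.sum_mul, sum_card_fiber]
  · have := le_ciSup (f := fun f : Fin 4 → Fin 4 => miBits (quantJoint (chan t) f))
      (Set.finite_range _).bddAbove id
    simp only [quantJoint_id, miBits_chan] at this
    exact this

/-- A two-level quantizer is trivial, or isolates one symbol, or splits the symbols in pairs. -/
lemma quantMI_two (t : ℝ) :
    quantMI (chan t) 2 = max (cellInfo t 1 + cellInfo t 3) (2 * cellInfo t 2) := by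
  have hmi : ∀ f : Fin 4 → Fin 2, miBits (quantJoint (chan t) f) =
      cellInfo t (Finset.univ.filter fun y => f y = 0).card +
      cellInfo t (Finset.univ.filter fun y => f y = 1).card := by
    intro f
    rw [miBits_quantJoint, Fin.sum_univ_two]
  have hnn := cellInfo_two_nonneg t
  refine le_antisymm (ciSup_le fun f => ?_) (max_le ?_ ?_)
  · have hs := sum_card_fiber f
    rw [Fin.sum_univ_two] at hs
    rw [hmi]
    generalize (Finset.univ.filter fun y => f y = 0).card = i at hs ⊢
    generalize (Finset.univ.filter fun y => f y = 1).card = j at hs ⊢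
    have hs' : i + j = 4 := by exact_mod_cast hs
    have hi : i ≤ 4 := by omega
    obtain rfl : j = 4 - i := by omega
    interval_cases i <;> norm_num [cellInfo_zero, cellInfo_four]
    · right; linarith
    · right; linarith
    · left; linarith
    · right; linarith
  · have := le_ciSup (f := fun f : Fin 4 → Fin 2 => miBits (quantJoint (chan t) f))
      (Set.finite_range _).bddAbove ![0, 1, 1, 1]
    refine le_trans (le_of_eq ?_) this
    simp only [hmi]
    rw [show (Finset.univ.filter fun y => (![0, 1, 1, 1] : Fin 4 → Fin 2) y = 0).card = 1 by decide,
      show (Finset.univ.filter fun y => (![0, 1, 1, 1] : Fin 4 → Fin 2) y = 1).card = 3 by decide]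
    norm_num
  · have := le_ciSup (f := fun f : Fin 4 → Fin 2 => miBits (quantJoint (chan t) f))
      (Set.finite_range _).bddAbove ![0, 0, 1, 1]
    refine le_trans (le_of_eq ?_) this
    simp only [hmi]
    rw [show (Finset.univ.filter fun y => (![0, 0, 1, 1] : Fin 4 → Fin 2) y = 0).card = 2 by decide,
      show (Finset.univ.filter fun y => (![0, 0, 1, 1] : Fin 4 → Fin 2) y = 1).card = 2 by decide]
    norm_num
    ring

lemma gap_eq (t : ℝ) :
    (cellInfo t 1 + cellInfo t 3 - 2 * cellInfo t 2) * Real.log 2 = 1 / 4 * gap t := by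
  have e1 := cellInfo_one_mul_log t
  have e2 := cellInfo_two_mul_log t
  have e3 := cellInfo_three_mul_log t
  unfold gap fam
  linear_combination e1 + e3 - 2 * e2

lemma two_mul_quantMI_two_lt {t : ℝ} (h0 : 0 < t) (h1 : t ≤ 1 / 3) (h : t ≠ 1 / 4) :
    2 * quantMI (chan t) 2 < 4 * cellInfo t 1 := by
  have hL : 0 < Real.log 2 := Real.log_pos one_lt_two
  have e1 := cellInfo_one_mul_log t
  have e2 := cellInfo_two_mul_log t
  have e3 := cellInfo_three_mul_log t
  have hA := one_three_pos h0.le h1 h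
  have hB := two_two_pos h0 h1 h
  have hA' : cellInfo t 1 + cellInfo t 3 < 2 * cellInfo t 1 := by
    refine lt_of_mul_lt_mul_right ?_ hL.le
    unfold fam at hA
    linarith
  have hB' : 2 * cellInfo t 2 < 2 * cellInfo t 1 := by
    refine lt_of_mul_lt_mul_right ?_ hL.le
    unfold fam at hB
    linarith
  rw [quantMI_two]
  have := max_lt hA' hB'
  linarith

/-- Remark 1: the example `X ~ Uniform{0,1,2,3}`, `Y = (X + Z) mod 4`, showing that
`I(X;[Y]_M)` does not have diminishing returns: `2 I(X;[Y]_2) < I(X;[Y]_4)` for all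
`δ ∉ {1/4, 1}`. -/
theorem no_diminishing_returns (δ : ℝ) (h0 : 0 ≤ δ) (h1 : δ ≤ 1) :
    let PZ : Fin 4 → ℝ := fun z => if z = 0 then δ else (1 - δ) / 3
    let p : Fin 4 → Fin 4 → ℝ := fun x y => (1 / 4) * PZ (y - x)
    quantMI p 4 = miBits p ∧
    miBits p = 2 - hBin δ - (1 - δ) * Real.logb 2 3 ∧
    (δ ≤ 1 / 4 →
      quantMI p 2 = hBin (1 / 4) - (1 / 4) * hBin δ - (3 / 4) * hBin ((1 - δ) / 3)) ∧
    (1 / 4 < δ → quantMI p 2 = 1 - hBin ((1 + 2 * δ) / 3)) ∧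
    (δ ≠ 1 / 4 → δ ≠ 1 → 2 * quantMI p 2 < quantMI p 4) := by
  intro PZ p
  obtain ⟨t, rfl⟩ : ∃ t, δ = 1 - 3 * t := ⟨(1 - δ) / 3, by ring⟩
  have ht : (1 - (1 - 3 * t)) / 3 = t := by ring
  have hp : p = chan t := by
    funext x y
    simp only [p, PZ, chan, ht]
  have ht0 : 0 ≤ t := by linarith
  have ht1 : t ≤ 1 / 3 := by linarith
  have hL : 0 < Real.log 2 := Real.log_pos one_lt_two
  have c1 := cellInfo_one_mul_log t
  have c2 := cellInfo_two_mul_log t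
  have c3 := cellInfo_three_mul_log t
  have x3 := xlog_mul (c := 3) three_ne_zero t
  have x2 := xlog_mul (c := 2) two_ne_zero t
  have hδ := hBin_mul_log (1 - 3 * t)
  rw [show 1 - (1 - 3 * t) = 3 * t by ring] at hδ
  have hg := gap_eq t
  rw [hp, ht]
  refine ⟨?_, ?_, fun h => ?_, fun h => ?_, fun h h' => ?_⟩
  · rw [quantMI_four ht0 ht1, miBits_chan]
  · rw [miBits_chan]
    refine mul_right_cancel₀ hL.ne' ?_
    have h3 : Real.logb 2 3 * Real.log 2 = Real.log 3 := by
      unfold Real.logb; field_simp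
    linear_combination 4 * c1 + hδ + 3 * t * h3 - x3
  · have hn := gap_nonneg (t := t) (by linarith) ht1
    have hle : 2 * cellInfo t 2 ≤ cellInfo t 1 + cellInfo t 3 := by
      refine le_of_mul_le_mul_right ?_ hL
      linarith
    rw [quantMI_two, max_eq_left hle]
    refine mul_right_cancel₀ hL.ne' ?_
    have hq := hBin_mul_log (1 / 4)
    rw [show (1 : ℝ) - 1 / 4 = 3 / 4 by norm_num] at hq
    unfold xlog at hq
    rw [log_quarter, log_three_quarters] at hq
    have ht' := hBin_mul_log t
    linear_combination c1 + c3 - hq + 1 / 4 * hδ + 3 / 4 * ht' - 1 / 4 * x3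
  · have hn := gap_nonpos (t := t) ht0 (by linarith)
    have hle : cellInfo t 1 + cellInfo t 3 ≤ 2 * cellInfo t 2 := by
      refine le_of_mul_le_mul_right ?_ hL
      linarith
    rw [quantMI_two, max_eq_right hle]
    refine mul_right_cancel₀ hL.ne' ?_
    have hq := hBin_mul_log (1 - 2 * t)
    rw [show 1 - (1 - 2 * t) = 2 * t by ring] at hq
    rw [show (1 + 2 * (1 - 3 * t)) / 3 = 1 - 2 * t by ring]
    linear_combination 2 * c2 + hq - x2
  · rw [quantMI_four ht0 ht1]
    refine two_mul_quantMI_two_lt (lt_of_le_of_ne ht0 ?_) ht1 ?_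
    · rintro rfl; exact h' (by ring)
    · rintro rfl; exact h (by ring)
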